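/- Let A ∈ ℝ^{n×d} have full column rank with condition number κ(A) = σ_max(A)/σ_min(A), let b ∈ ℝⁿ, and define OPT = min_{x ∈ ℝ^d} ‖A AᵀA x − b‖₂. Let ε₃ ∈ (0,1), ε₁ ≤ ε₃/10, and ε₂ ≤ ε₃/κ(A). Suppose y' ∈ ℝ^d satisfies ‖Ay' − b‖₂ ≤ (1+ε₁)·min_{y ∈ ℝ^d} ‖Ay − b‖₂ and x' ∈ ℝ^d satisfies ‖AᵀA x' − y'‖₂ ≤ ε₂ ‖y'‖₂. Then ‖A AᵀA x' − b‖₂ ≤ (1+ε₃)·OPT + ε₃·‖b‖₂. -/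

import Mathlib

open Matrix
open scoped BigOperators

/-- The Euclidean (`ℓ₂`) norm of a vector in `ℝ^n`. -/
noncomputable def vnorm {n : ℕ} (v : Fin n → ℝ) : ℝ :=
  Real.sqrt (∑ i, v i ^ 2)

/-- The minimum singular value `σ_min(A) = min_{‖x‖₂ = 1} ‖Ax‖₂`. -/
noncomputable def sigmaMin {n d : ℕ} (A : Matrix (Fin n) (Fin d) ℝ) : ℝ :=
  sInf {c : ℝ | ∃ x : Fin d → ℝ, vnorm x = 1 ∧ c = vnorm (A.mulVec x)}

/-- The maximum singular value (spectral / operator norm)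
`σ_max(A) = ‖A‖ = max_{‖x‖₂ = 1} ‖Ax‖₂`. -/
noncomputable def sigmaMax {n d : ℕ} (A : Matrix (Fin n) (Fin d) ℝ) : ℝ :=
  sSup {c : ℝ | ∃ x : Fin d → ℝ, vnorm x = 1 ∧ c = vnorm (A.mulVec x)}

/-- The condition number `κ(A) = σ_max(A) / σ_min(A)`. -/
noncomputable def kappa {n d : ℕ} (A : Matrix (Fin n) (Fin d) ℝ) : ℝ :=
  sigmaMax A / sigmaMin A

theorem vnorm_eq {n : ℕ} (v : Fin n → ℝ) : vnorm v = ‖WithLp.toLp 2 v‖ := by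
  simp [vnorm, EuclideanSpace.norm_eq]

theorem vnorm_nonneg {n : ℕ} (v : Fin n → ℝ) : 0 ≤ vnorm v := Real.sqrt_nonneg _

theorem vnorm_smul {n : ℕ} (c : ℝ) (v : Fin n → ℝ) : vnorm (c • v) = |c| * vnorm v := by
  rw [vnorm_eq, vnorm_eq, WithLp.toLp_smul, norm_smul, Real.norm_eq_abs]

theorem vnorm_add_le {n : ℕ} (v w : Fin n → ℝ) : vnorm (v + w) ≤ vnorm v + vnorm w := by
  rw [vnorm_eq, vnorm_eq, vnorm_eq, WithLp.toLp_add]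
  exact norm_add_le _ _

theorem vnorm_eq_zero {n : ℕ} {v : Fin n → ℝ} (h : vnorm v = 0) : v = 0 := by
  rw [vnorm_eq, norm_eq_zero] at h
  simpa using h

theorem vnorm_zero {n : ℕ} : vnorm (0 : Fin n → ℝ) = 0 := by
  simp [vnorm]

theorem vnorm_mulVec_bound {n d : ℕ} (A : Matrix (Fin n) (Fin d) ℝ) :
    ∃ C : ℝ, ∀ x, vnorm (A.mulVec x) ≤ C * vnorm x := by
  refine ⟨‖(Matrix.toEuclideanLin A).toContinuousLinearMap‖, fun x => ?_⟩
  have h := (Matrix.toEuclideanLin A).toContinuousLinearMap.le_opNorm (WithLp.toLp 2 x)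
  rw [vnorm_eq, vnorm_eq]
  simpa using h

theorem vnorm_normalize {d : ℕ} {x : Fin d → ℝ} (h : vnorm x ≠ 0) :
    vnorm ((vnorm x)⁻¹ • x) = 1 := by
  rw [vnorm_smul, abs_of_nonneg (inv_nonneg.2 (vnorm_nonneg x)), inv_mul_cancel₀ h]

theorem vnorm_mulVec_normalize {n d : ℕ} (A : Matrix (Fin n) (Fin d) ℝ) (x : Fin d → ℝ) :
    vnorm (A.mulVec ((vnorm x)⁻¹ • x)) = vnorm (A.mulVec x) / vnorm x := by
  rw [Matrix.mulVec_smul, vnorm_smul, abs_of_nonneg (inv_nonneg.2 (vnorm_nonneg x)),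
    div_eq_inv_mul]

theorem le_sigmaMax {n d : ℕ} (A : Matrix (Fin n) (Fin d) ℝ) (x : Fin d → ℝ) :
    vnorm (A.mulVec x) ≤ sigmaMax A * vnorm x := by
  by_cases h : vnorm x = 0
  · rw [vnorm_eq_zero h]; simp [vnorm_zero]
  · have hp : 0 < vnorm x := lt_of_le_of_ne (vnorm_nonneg x) (Ne.symm h)
    rw [← div_le_iff₀ hp, ← vnorm_mulVec_normalize]
    obtain ⟨C, hC⟩ := vnorm_mulVec_bound A
    refine le_csSup ⟨C, ?_⟩ ⟨_, vnorm_normalize h, rfl⟩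
    rintro c ⟨z, hz, rfl⟩
    simpa [hz] using hC z

theorem sigmaMin_le {n d : ℕ} (A : Matrix (Fin n) (Fin d) ℝ) (x : Fin d → ℝ) :
    sigmaMin A * vnorm x ≤ vnorm (A.mulVec x) := by
  by_cases h : vnorm x = 0
  · rw [h, mul_zero]; exact vnorm_nonneg _
  · have hp : 0 < vnorm x := lt_of_le_of_ne (vnorm_nonneg x) (Ne.symm h)
    rw [← le_div_iff₀ hp, ← vnorm_mulVec_normalize]
    refine csInf_le ⟨0, ?_⟩ ⟨_, vnorm_normalize h, rfl⟩
    rintro c ⟨z, hz, rfl⟩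
    exact vnorm_nonneg _

theorem sigmaMin_nonneg {n d : ℕ} (A : Matrix (Fin n) (Fin d) ℝ) : 0 ≤ sigmaMin A := by
  refine Real.sInf_nonneg ?_
  rintro c ⟨z, hz, rfl⟩
  exact vnorm_nonneg _

theorem sigmaMax_nonneg {n d : ℕ} (A : Matrix (Fin n) (Fin d) ℝ) : 0 ≤ sigmaMax A := by
  refine Real.sSup_nonneg ?_
  rintro c ⟨z, hz, rfl⟩
  exact vnorm_nonneg _

/-- The error of the second regression, pushed through `A`. -/
theorem second_step {n d : ℕ} (A : Matrix (Fin n) (Fin d) ℝ) (ε₂ ε₃ : ℝ) (h3 : 0 < ε₃)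
    (hε₂ : ε₂ ≤ ε₃ / kappa A) (e y : Fin d → ℝ) (he : vnorm e ≤ ε₂ * vnorm y) :
    vnorm (A.mulVec e) ≤ ε₃ * vnorm (A.mulVec y) := by
  have hy0 := vnorm_nonneg y
  have hr : 0 ≤ ε₃ * vnorm (A.mulVec y) := mul_nonneg h3.le (vnorm_nonneg _)
  by_cases h2 : ε₂ ≤ 0
  · have h0 : vnorm e = 0 := le_antisymm
      (he.trans (mul_nonpos_of_nonpos_of_nonneg h2 hy0)) (vnorm_nonneg e)
    rw [vnorm_eq_zero h0, Matrix.mulVec_zero, vnorm_zero]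
    exact hr
  · push Not at h2
    have hk : 0 < ε₃ / kappa A := lt_of_lt_of_le h2 hε₂
    have hk' : 0 < kappa A := by
      by_contra hcon
      exact absurd hk (not_lt.2 (div_nonpos_of_nonneg_of_nonpos h3.le (not_lt.1 hcon)))
    have hm : 0 < sigmaMin A := by
      refine lt_of_le_of_ne (sigmaMin_nonneg A) fun h => ?_
      rw [kappa, ← h, div_zero] at hk'
      exact lt_irrefl _ hk'
    have key : sigmaMax A * ε₂ ≤ ε₃ * sigmaMin A := by
      rw [le_div_iff₀ hk', kappa, mul_div_assoc', div_le_iff₀ hm] at hε₂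
      linarith
    calc vnorm (A.mulVec e) ≤ sigmaMax A * vnorm e := le_sigmaMax A e
      _ ≤ sigmaMax A * (ε₂ * vnorm y) := mul_le_mul_of_nonneg_left he (sigmaMax_nonneg A)
      _ = (sigmaMax A * ε₂) * vnorm y := by ring
      _ ≤ (ε₃ * sigmaMin A) * vnorm y := mul_le_mul_of_nonneg_right key hy0
      _ = ε₃ * (sigmaMin A * vnorm y) := by ring
      _ ≤ ε₃ * vnorm (A.mulVec y) := mul_le_mul_of_nonneg_left (sigmaMin_le A y) h3.le

/-- Existence of the least squares minimiser, with the Pythagorean identities. -/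
theorem exists_proj {n d : ℕ} (A : Matrix (Fin n) (Fin d) ℝ) (b : Fin n → ℝ) :
    ∃ z : Fin d → ℝ, vnorm (A.mulVec z) ≤ vnorm b ∧ ∀ y : Fin d → ℝ,
      vnorm (A.mulVec y - b) ^ 2
        = vnorm (A.mulVec y - A.mulVec z) ^ 2 + vnorm (A.mulVec z - b) ^ 2 := by
  let K := LinearMap.range (Matrix.toEuclideanLin A)
  let B : EuclideanSpace ℝ (Fin n) := WithLp.toLp 2 b
  obtain ⟨z, hz⟩ : K.starProjection B ∈ K := K.starProjection_apply_mem B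
  have hz' : WithLp.toLp 2 (A.mulVec z.ofLp) = K.starProjection B := by
    rw [← hz]; rfl
  refine ⟨z.ofLp, ?_, fun y => ?_⟩
  · rw [vnorm_eq, vnorm_eq, hz']
    exact K.norm_starProjection_apply_le B
  · rw [vnorm_eq, vnorm_eq, vnorm_eq, WithLp.toLp_sub, WithLp.toLp_sub, WithLp.toLp_sub, hz']
    have hyK : WithLp.toLp 2 (A.mulVec y) ∈ K := ⟨WithLp.toLp 2 y, rfl⟩
    have horth : inner ℝ (WithLp.toLp 2 (A.mulVec y) - K.starProjection B)
        (K.starProjection B - B) = 0 := by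
      have h1 := K.starProjection_inner_eq_zero B _
        (K.sub_mem hyK (K.starProjection_apply_mem B))
      rw [← neg_sub B, inner_neg_right, real_inner_comm, h1, neg_zero]
    have h := norm_add_sq_eq_norm_sq_add_norm_sq_of_inner_eq_zero _ _ horth
    rw [sub_add_sub_cancel] at h
    simpa [sq] using h

/-- Error guarantee for the three-matrix regression
`min_x ‖A AᵀA x - b‖₂`, solved by first approximately solving `min_y ‖Ay - b‖₂`
(giving `y'`) and then the PSD regression `min_x ‖AᵀAx - y'‖₂` (giving `x'`). -/
theorem three_matrix_regression_error {n d : ℕ} (A : Matrix (Fin n) (Fin d) ℝ)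
    (hrank : A.rank = d) (b : Fin n → ℝ)
    (ε₁ ε₂ ε₃ : ℝ) (hε₃ : ε₃ ∈ Set.Ioo (0 : ℝ) 1)
    (hε₁ : ε₁ ≤ ε₃ / 10) (hε₂ : ε₂ ≤ ε₃ / kappa A)
    (y' x' : Fin d → ℝ)
    (hy : vnorm (A.mulVec y' - b)
        ≤ (1 + ε₁) * sInf {c : ℝ | ∃ y : Fin d → ℝ, c = vnorm (A.mulVec y - b)})
    (hx : vnorm ((Aᵀ * A).mulVec x' - y') ≤ ε₂ * vnorm y') :
    vnorm ((A * Aᵀ * A).mulVec x' - b)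
      ≤ (1 + ε₃) * sInf {c : ℝ | ∃ x : Fin d → ℝ, c = vnorm ((A * Aᵀ * A).mulVec x - b)}
        + ε₃ * vnorm b := by
  obtain ⟨h3, h31⟩ := hε₃
  obtain ⟨z, hzb, hpy⟩ := exists_proj A b
  set O := vnorm (A.mulVec z - b) with hO
  have hO0 : 0 ≤ O := vnorm_nonneg _
  have hmin : ∀ y, O ≤ vnorm (A.mulVec y - b) := fun y => by
    refine abs_le_of_sq_le_sq' ?_ (vnorm_nonneg _) |>.2
    rw [hpy y]
    nlinarith [sq_nonneg (vnorm (A.mulVec y - A.mulVec z))]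
  have hOA : sInf {c : ℝ | ∃ y : Fin d → ℝ, c = vnorm (A.mulVec y - b)} = O := by
    refine IsLeast.csInf_eq ⟨⟨z, rfl⟩, ?_⟩
    rintro c ⟨y, rfl⟩
    exact hmin y
  have hfac : ∀ x, (A * Aᵀ * A).mulVec x = A.mulVec ((Aᵀ * A).mulVec x) := fun x => by
    rw [Matrix.mulVec_mulVec, Matrix.mul_assoc]
  have hO3 : O ≤ sInf {c : ℝ | ∃ x : Fin d → ℝ, c = vnorm ((A * Aᵀ * A).mulVec x - b)} := by
    refine le_csInf ⟨_, 0, rfl⟩ ?_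
    rintro c ⟨x, rfl⟩
    rw [hfac]
    exact hmin _
  rw [hOA] at hy
  have hy2 : vnorm (A.mulVec y' - b) ≤ (1 + ε₃ / 10) * O :=
    hy.trans (mul_le_mul_of_nonneg_right (by linarith) hO0)
  have hdist : vnorm (A.mulVec y' - A.mulVec z) ≤ O / 2 := by
    refine abs_le_of_sq_le_sq' ?_ (by linarith) |>.2
    have h1 := hpy y'
    have h2 : vnorm (A.mulVec y' - b) ≤ 11 / 10 * O :=
      hy2.trans (mul_le_mul_of_nonneg_right (by linarith) hO0)
    have h4 : vnorm (A.mulVec y' - b) ^ 2 ≤ (11 / 10 * O) ^ 2 :=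
      pow_le_pow_left₀ (vnorm_nonneg _) h2 2
    nlinarith [sq_nonneg O]
  have hAy : vnorm (A.mulVec y') ≤ vnorm b + O / 2 := by
    have h := vnorm_add_le (A.mulVec y' - A.mulVec z) (A.mulVec z)
    rw [sub_add_cancel] at h
    linarith
  have hs := second_step A ε₂ ε₃ h3 hε₂ _ y' hx
  have ht := vnorm_add_le (A.mulVec ((Aᵀ * A).mulVec x' - y')) (A.mulVec y' - b)
  rw [Matrix.mulVec_sub, sub_add_sub_cancel, ← Matrix.mulVec_sub, ← hfac] at ht
  have hm1 := mul_le_mul_of_nonneg_left hAy h3.le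
  have hm2 := mul_le_mul_of_nonneg_left hO3 (by linarith : 0 ≤ 1 + ε₃)
  have hm3 := mul_nonneg h3.le hO0
  nlinarith
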